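/- arXiv:1508.03507 — 5 statements merged into one kernel-verified Lean document; each statement's English description precedes it below -/
import Mathlib

section
/- Let a, b, c be real numbers with 0 < a < 1, 0 < b < 1, c > 0, and a·c < 1. Then the double series ∑_{X≥1} ∑_{Y≥1} a^X · b^Y · c^{min(X,2Y)} converges and equals a·b·c·(1 − a + a·c − a²·b·c) / ((1 − a)·(1 − b)·(1 − a²·b·c²)). -/
/-! Let `k ≥ 1` stand in place of `2`, and put `q = b * (a * c) ^ k`. Split the index pairs
according to which of `X` and `k * Y` attains the minimum. If `k * Y < X`, then `X = k * Y + l` and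
the term is `a ^ l * q ^ Y`. If `X ≤ k * Y`, then `Y = ⌈X / k⌉ + j` and the term is a function of
`X` times `b ^ j`; grouping the `X` by `⌈X / k⌉` leaves a geometric series of ratio `q`. The series
`∑ (a * c) ^ X` never appears by itself, so the sum has no pole at `a * c = 1`. -/

theorem le_mul_iff_natPred_div_le_natPred {k X Y : ℕ+} :
    X ≤ k * Y ↔ X.natPred / k ≤ Y.natPred := by
  rw [← Nat.lt_succ_iff, Nat.div_lt_iff_lt_mul k.pos, Nat.succ_eq_add_one, PNat.natPred_add_one,
    mul_comm, ← PNat.mul_coe, ← Nat.succ_le_iff, Nat.succ_eq_add_one, PNat.natPred_add_one,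
    PNat.coe_le_coe]

/-- The parametrization `(l, Y) ↦ (k * Y + l, Y)` of the pairs `(X, Y)` with `k * Y < X`. -/
def mulLtEquiv (k : ℕ+) : ℕ+ × ℕ+ ≃ {p : ℕ+ × ℕ+ | k * p.2 < p.1} where
  toFun p := ⟨(k * p.2 + p.1, p.2), PNat.lt_add_right _ _⟩
  invFun p := (p.1.1 - k * p.1.2, p.1.2)
  left_inv p := by simp only [add_comm (k * p.2), PNat.add_sub]
  right_inv p := Subtype.ext <| Prod.ext (PNat.add_sub_of_lt p.2) rfl

/-- The parametrization `(m, j) ↦ (m + 1, m / k + j + 1)` of the pairs `(X, Y)` with `X ≤ k * Y`.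
Here `m / k + 1 = ⌈X / k⌉` is the least admissible `Y`. The region is written as a complement to
match `mulLtEquiv`. -/
def leMulEquiv (k : ℕ+) : ℕ × ℕ ≃ ↥{p : ℕ+ × ℕ+ | k * p.2 < p.1}ᶜ where
  toFun p := ⟨(p.1.succPNat, (p.1 / k + p.2).succPNat), not_lt.mpr <|
    le_mul_iff_natPred_div_le_natPred.mpr <| by
      simp only [Nat.natPred_succPNat, Nat.le_add_right]⟩
  invFun p := (p.1.1.natPred, p.1.2.natPred - p.1.1.natPred / k)
  left_inv p := by simp only [Nat.natPred_succPNat, Nat.add_sub_cancel_left]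
  right_inv := fun ⟨(X, Y), hXY⟩ ↦ by
    have hdiv : X.natPred / k ≤ Y.natPred := le_mul_iff_natPred_div_le_natPred.mp (not_lt.mp hXY)
    simp only [Nat.add_sub_cancel' hdiv, PNat.succPNat_natPred]

theorem hasSum_mul_of_summable_norm {R ι κ : Type*} [NormedRing R] [CompleteSpace R] {f : ι → R}
    {g : κ → R} {s t : R} (hf : HasSum f s) (hg : HasSum g t) (hf_norm : Summable fun i ↦ ‖f i‖)
    (hg_norm : Summable fun j ↦ ‖g j‖) : HasSum (fun p : ι × κ ↦ f p.1 * g p.2) (s * t) :=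
  hf.mul hg (summable_mul_of_summable_norm hf_norm hg_norm)

section

variable {𝕜 : Type*} [NormedField 𝕜] {a b c z : 𝕜}

theorem hasSum_pnat_geometric (hz : ‖z‖ < 1) :
    HasSum (fun n : ℕ+ ↦ z ^ (n : ℕ)) (z / (1 - z)) := by
  rw [hasSum_pnat_iff_hasSum_succ (f := fun n ↦ z ^ n)]
  simpa only [pow_succ', div_eq_mul_inv] using (hasSum_geometric_of_norm_lt_one hz).mul_left z

theorem summable_norm_pnat_geometric (hz : ‖z‖ < 1) : Summable fun n : ℕ+ ↦ ‖z ^ (n : ℕ)‖ := by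
  simpa only [norm_pow] using (hasSum_pnat_geometric ((norm_norm z).trans_lt hz)).summable

theorem hasSum_pow_mul_pow_div [CompleteSpace 𝕜] (k : ℕ) [NeZero k] (hq : ‖b * z ^ k‖ < 1) :
    HasSum (fun m : ℕ ↦ z ^ m * b ^ (m / k))
      ((∑ r ∈ Finset.range k, z ^ r) / (1 - b * z ^ k)) := by
  rw [← (Nat.divModEquiv k).symm.hasSum_iff, ← Fin.sum_univ_eq_sum_range (z ^ ·), ← inv_mul_eq_div]
  have hprod := hasSum_mul_of_summable_norm (R := 𝕜) (hasSum_geometric_of_norm_lt_one hq)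
    (hasSum_fintype fun r : Fin k ↦ z ^ (r : ℕ)) (summable_norm_geometric_of_norm_lt_one hq)
    .of_finite
  refine hprod.congr_fun fun p ↦ ?_
  have hdiv : (p.1 * k + p.2) / k = p.1 :=
    congrArg Prod.fst ((Nat.divModEquiv k).apply_symm_apply p)
  simp only [Function.comp_apply, Nat.divModEquiv_symm_apply, hdiv]
  ring

theorem summable_norm_pow_mul_pow_div (k : ℕ) [NeZero k] (hq : ‖b * z ^ k‖ < 1) :
    Summable fun m : ℕ ↦ ‖z ^ m * b ^ (m / k)‖ := by
  have hq_norm : ‖‖b‖ * ‖z‖ ^ k‖ < 1 := by rwa [← norm_pow, ← norm_mul, norm_norm]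
  simpa only [norm_mul, norm_pow] using (hasSum_pow_mul_pow_div k hq_norm).summable

variable [CompleteSpace 𝕜]

theorem hasSum_pow_mul_pow_mul_pow_min_of_mul_lt (k : ℕ+) (ha : ‖a‖ < 1)
    (hq : ‖b * (a * c) ^ (k : ℕ)‖ < 1) :
    HasSum ((fun p : ℕ+ × ℕ+ ↦ a ^ (p.1 : ℕ) * b ^ (p.2 : ℕ) * c ^ min (p.1 : ℕ) (k * p.2)) ∘
        ((↑) : {p : ℕ+ × ℕ+ | k * p.2 < p.1} → ℕ+ × ℕ+))
      (a / (1 - a) * (b * (a * c) ^ (k : ℕ) / (1 - b * (a * c) ^ (k : ℕ)))) := by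
  rw [← (mulLtEquiv k).hasSum_iff]
  have hprod := hasSum_mul_of_summable_norm (R := 𝕜) (hasSum_pnat_geometric ha)
    (hasSum_pnat_geometric hq) (summable_norm_pnat_geometric ha) (summable_norm_pnat_geometric hq)
  refine hprod.congr_fun fun p ↦ ?_
  simp only [Function.comp_apply, mulLtEquiv, Equiv.coe_fn_mk, PNat.add_coe, PNat.mul_coe]
  rw [min_eq_right (Nat.le_add_right _ _)]
  ring

theorem hasSum_pow_mul_pow_mul_pow_min_of_le_mul (k : ℕ+) (hb : ‖b‖ < 1)
    (hq : ‖b * (a * c) ^ (k : ℕ)‖ < 1) :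
    HasSum ((fun p : ℕ+ × ℕ+ ↦ a ^ (p.1 : ℕ) * b ^ (p.2 : ℕ) * c ^ min (p.1 : ℕ) (k * p.2)) ∘
        ((↑) : ↥{p : ℕ+ × ℕ+ | k * p.2 < p.1}ᶜ → ℕ+ × ℕ+))
      (a * b * c * ((∑ r ∈ Finset.range k, (a * c) ^ r) / (1 - b * (a * c) ^ (k : ℕ)) *
        (1 - b)⁻¹)) := by
  rw [← (leMulEquiv k).hasSum_iff]
  have hprod := hasSum_mul_of_summable_norm (R := 𝕜) (hasSum_pow_mul_pow_div k hq)
    (hasSum_geometric_of_norm_lt_one hb) (summable_norm_pow_mul_pow_div k hq)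
    (summable_norm_geometric_of_norm_lt_one hb)
  refine (hprod.mul_left (a * b * c)).congr_fun fun p ↦ ?_
  have hmin : ((leMulEquiv k p).1.1 : ℕ) ≤ k * (leMulEquiv k p).1.2 :=
    not_lt.mp (leMulEquiv k p).2
  rw [Function.comp_apply, Function.comp_apply, min_eq_left hmin]
  simp only [leMulEquiv, Equiv.coe_fn_mk, Nat.succPNat_coe, Nat.succ_eq_add_one]
  ring

theorem hasSum_pow_mul_pow_mul_pow_min (k : ℕ+) (ha : ‖a‖ < 1) (hb : ‖b‖ < 1)
    (hq : ‖b * (a * c) ^ (k : ℕ)‖ < 1) :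
    HasSum (fun p : ℕ+ × ℕ+ ↦ a ^ (p.1 : ℕ) * b ^ (p.2 : ℕ) * c ^ min (p.1 : ℕ) (k * p.2))
      ((a * b * c * (∑ r ∈ Finset.range k, (a * c) ^ r) / (1 - b) +
        a / (1 - a) * (b * (a * c) ^ (k : ℕ))) / (1 - b * (a * c) ^ (k : ℕ))) := by
  convert (hasSum_pow_mul_pow_mul_pow_min_of_mul_lt k ha hq).add_compl
    (hasSum_pow_mul_pow_mul_pow_min_of_le_mul k hb hq) using 1
  ring

theorem heisenberg_sum_min_X_2Y_general (ha : ‖a‖ < 1) (hb : ‖b‖ < 1)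
    (hq : ‖a ^ 2 * b * c ^ 2‖ < 1) :
    HasSum
      (fun p : ℕ+ × ℕ+ ↦
        a ^ (p.1 : ℕ) * b ^ (p.2 : ℕ) * c ^ min (p.1 : ℕ) (2 * (p.2 : ℕ)))
      (a * b * c * (1 - a + a * c - a ^ 2 * b * c) /
        ((1 - a) * (1 - b) * (1 - a ^ 2 * b * c ^ 2))) := by
  have hq_eq : b * (a * c) ^ 2 = a ^ 2 * b * c ^ 2 := by ring
  have ha_ne : 1 - a ≠ 0 := (isUnit_one_sub_of_norm_lt_one ha).ne_zero
  have hb_ne : 1 - b ≠ 0 := (isUnit_one_sub_of_norm_lt_one hb).ne_zero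
  have hq_ne : 1 - a ^ 2 * b * c ^ 2 ≠ 0 := (isUnit_one_sub_of_norm_lt_one hq).ne_zero
  convert hasSum_pow_mul_pow_mul_pow_min 2 ha hb (by rwa [PNat.val_ofNat, hq_eq]) using 1
  · rfl
  rw [PNat.val_ofNat, hq_eq, Finset.sum_range_succ, Finset.sum_range_one]
  field_simp
  ring

end

/-- Lemma 2.3(2): ∑_{X,Y≥1} a^X b^Y c^{min(X,2Y)}
    = abc(1-a+ac-a²bc)/((1-a)(1-b)(1-a²bc²)). -/
theorem heisenberg_sum_min_X_2Y (a b c : ℝ) (ha0 : 0 < a) (ha1 : a < 1)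
    (hb0 : 0 < b) (hb1 : b < 1) (hc : 0 < c) (hac : a * c < 1) :
    HasSum
      (fun p : ℕ+ × ℕ+ =>
        a ^ (p.1 : ℕ) * b ^ (p.2 : ℕ) * c ^ min (p.1 : ℕ) (2 * (p.2 : ℕ)))
      (a * b * c * (1 - a + a * c - a ^ 2 * b * c) /
        ((1 - a) * (1 - b) * (1 - a ^ 2 * b * c ^ 2))) := by
  have hq : a ^ 2 * b * c ^ 2 < 1 := by
    rw [mul_right_comm, ← mul_pow]
    exact mul_lt_one_of_nonneg_of_lt_one_right (pow_le_one₀ (by positivity) hac.le) hb0.le hb1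
  apply heisenberg_sum_min_X_2Y_general <;> rwa [Real.norm_of_nonneg (by positivity)]
end

section
/- Let a, b, c be real numbers with 0 < a < 1, 0 < b < 1, c > 0, and a·c² < 1. Then the double series ∑_{X≥1} ∑_{Y≥1} a^X · b^Y · c^{min(X,Y) + min(X,2Y)} converges and equals a·b·c²·(1 − a + a·c − a·b·c − a²·b·c³ + a³·b²·c³) / ((1 − a)·(1 − b)·(1 − a·b·c²)·(1 − a²·b·c³)). -/
/-!
Cut the quadrant along the rays `X = Y` and `X = 2 * Y`. On each of the three resulting cones the
two minima are linear, so the summand is a monomial `x ^ X * y ^ Y`, with `(x, y)` equal to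
`(a * c ^ 2, b)` for `X ≤ Y`, to `(a * c, b * c)` for `Y < X < 2 * Y` and to `(a, b * c ^ 3)` for
`2 * Y ≤ X`. Each cone is unimodular: its lattice points are parametrized by `ℕ × ℕ`, so that the
sum of a monomial over it is a product of two geometric series.
-/

open Function Set

section Geometric

variable {𝕜 : Type*} [NormedDivisionRing 𝕜] {r s : 𝕜}

lemma hasSum_geometric_mul_geometric_of_norm_lt_one (hr : ‖r‖ < 1) (hs : ‖s‖ < 1) :
    HasSum (fun q : ℕ × ℕ => r ^ q.1 * s ^ q.2) ((1 - r)⁻¹ * (1 - s)⁻¹) := by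
  have norm_summable : Summable fun q : ℕ × ℕ => ‖r ^ q.1 * s ^ q.2‖ :=
    (summable_norm_geometric_of_norm_lt_one hr).mul_norm (summable_norm_geometric_of_norm_lt_one hs)
  have norm_summable_sigma : Summable fun q : Σ _ : ℕ, ℕ => ‖r ^ q.1 * s ^ q.2‖ := by
    simpa only [comp_def, Equiv.sigmaEquivProd_apply] using
      (Equiv.sigmaEquivProd ℕ ℕ).summable_iff.mpr norm_summable
  -- Going through `HasSum.of_sigma` rather than `HasSum.mul` avoids completeness of `𝕜`.
  have hasSum_sigma : HasSum (fun q : Σ _ : ℕ, ℕ => r ^ q.1 * s ^ q.2) ((1 - r)⁻¹ * (1 - s)⁻¹) :=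
    HasSum.of_sigma (fun i => (hasSum_geometric_of_norm_lt_one hs).mul_left (r ^ i))
      ((hasSum_geometric_of_norm_lt_one hr).mul_right _)
      (cauchySeq_finset_of_summable_norm norm_summable_sigma)
  exact (Equiv.sigmaEquivProd ℕ ℕ).hasSum_iff.mp hasSum_sigma

lemma hasSum_subtype_of_parametrization_of_geometric {α : Type*} {S : Set α} {f : α → 𝕜}
    {g : ℕ × ℕ → α} {t : 𝕜} (hg : Injective g) (hS : range g = S)
    (hfg : ∀ i j, f (g (i, j)) = r ^ i * s ^ j * t) (hr : ‖r‖ < 1) (hs : ‖s‖ < 1) :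
    HasSum (fun p : S => f p) ((1 - r)⁻¹ * (1 - s)⁻¹ * t) := by
  subst hS
  have hcomp : f ∘ g = fun q => r ^ q.1 * s ^ q.2 * t := funext fun q => hfg q.1 q.2
  refine hg.hasSum_range_iff.mpr ?_
  rw [hcomp]
  exact (hasSum_geometric_mul_geometric_of_norm_lt_one hr hs).mul_right t

end Geometric

lemma hasSum_of_hasSum_cones {M : Type*} [AddCommMonoid M] [TopologicalSpace M] [ContinuousAdd M]
    {f : ℕ+ × ℕ+ → M} {l m h : M}
    (low : HasSum (fun p : {p : ℕ+ × ℕ+ | (p.1 : ℕ) ≤ p.2} => f p) l)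
    (mid : HasSum (fun p : {p : ℕ+ × ℕ+ | (p.2 : ℕ) < p.1 ∧ (p.1 : ℕ) < 2 * p.2} => f p) m)
    (high : HasSum (fun p : {p : ℕ+ × ℕ+ | 2 * (p.2 : ℕ) ≤ p.1} => f p) h) :
    HasSum f (l + m + h) := by
  have low_disjoint_mid : Disjoint {p : ℕ+ × ℕ+ | (p.1 : ℕ) ≤ p.2}
      {p : ℕ+ × ℕ+ | (p.2 : ℕ) < p.1 ∧ (p.1 : ℕ) < 2 * p.2} :=
    disjoint_left.mpr fun _ hle hlt => hlt.1.not_ge hle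
  have low_mid_isCompl_high : IsCompl ({p : ℕ+ × ℕ+ | (p.1 : ℕ) ≤ p.2} ∪
      {p : ℕ+ × ℕ+ | (p.2 : ℕ) < p.1 ∧ (p.1 : ℕ) < 2 * p.2})
      {p : ℕ+ × ℕ+ | 2 * (p.2 : ℕ) ≤ p.1} := by
    refine compl_eq_iff_isCompl.mp (ext fun p => ?_)
    have hY := p.2.pos
    simp only [mem_compl_iff, mem_union, mem_ofPred_eq]
    omega
  have low_mid := HasSum.add_disjoint (f := f) low_disjoint_mid low mid
  exact low_mid.add_isCompl low_mid_isCompl_high high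

section Cones

variable {𝕜 : Type*} [NormedField 𝕜] {x y : 𝕜}

lemma hasSum_pow_mul_pow_of_le (hxy : ‖x * y‖ < 1) (hy : ‖y‖ < 1) :
    HasSum (fun p : {p : ℕ+ × ℕ+ | (p.1 : ℕ) ≤ p.2} => x ^ (p.1.1 : ℕ) * y ^ (p.1.2 : ℕ))
      ((1 - x * y)⁻¹ * (1 - y)⁻¹ * (x * y)) := by
  refine hasSum_subtype_of_parametrization_of_geometric
    (f := fun p : ℕ+ × ℕ+ => x ^ (p.1 : ℕ) * y ^ (p.2 : ℕ))
    (g := fun q => (q.1.succPNat, (q.1 + q.2).succPNat)) ?injective ?range ?monomial hxy hy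
  case injective =>
    rintro ⟨i, j⟩ ⟨k, l⟩ h
    simp only [Prod.mk.injEq, Nat.succPNat_inj] at h ⊢
    omega
  case range =>
    refine Subset.antisymm (range_subset_iff.mpr fun q => ?_) fun ⟨X, Y⟩ hXY => ?_
    · simp only [mem_ofPred_eq, Nat.succPNat_coe]
      omega
    · have hX := X.pos
      have hle : (X : ℕ) ≤ Y := hXY
      refine ⟨((X : ℕ) - 1, Y - X), Prod.ext (PNat.eq ?_) (PNat.eq ?_)⟩ <;>
        simp only [Nat.succPNat_coe] <;> omega
  case monomial =>
    intro i j
    simp only [Nat.succPNat_coe, Nat.succ_eq_add_one]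
    ring

lemma hasSum_pow_mul_pow_of_lt_of_lt_two_mul (hxxy : ‖x ^ 2 * y‖ < 1) (hxy : ‖x * y‖ < 1) :
    HasSum (fun p : {p : ℕ+ × ℕ+ | (p.2 : ℕ) < p.1 ∧ (p.1 : ℕ) < 2 * p.2} =>
        x ^ (p.1.1 : ℕ) * y ^ (p.1.2 : ℕ))
      ((1 - x ^ 2 * y)⁻¹ * (1 - x * y)⁻¹ * (x ^ 3 * y ^ 2)) := by
  refine hasSum_subtype_of_parametrization_of_geometric
    (f := fun p : ℕ+ × ℕ+ => x ^ (p.1 : ℕ) * y ^ (p.2 : ℕ))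
    (g := fun q => ((2 * q.1 + q.2 + 2).succPNat, (q.1 + q.2 + 1).succPNat))
    ?injective ?range ?monomial hxxy hxy
  case injective =>
    rintro ⟨i, j⟩ ⟨k, l⟩ h
    simp only [Prod.mk.injEq, Nat.succPNat_inj] at h ⊢
    omega
  case range =>
    refine Subset.antisymm (range_subset_iff.mpr fun q => ?_) fun ⟨X, Y⟩ hXY => ?_
    · simp only [mem_ofPred_eq, Nat.succPNat_coe]
      omega
    · have hlt : (Y : ℕ) < X ∧ (X : ℕ) < 2 * Y := hXY
      refine ⟨((X : ℕ) - Y - 1, 2 * (Y : ℕ) - X - 1), Prod.ext (PNat.eq ?_) (PNat.eq ?_)⟩ <;>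
        simp only [Nat.succPNat_coe] <;> omega
  case monomial =>
    intro i j
    simp only [Nat.succPNat_coe, Nat.succ_eq_add_one]
    ring

lemma hasSum_pow_mul_pow_of_two_mul_le (hxxy : ‖x ^ 2 * y‖ < 1) (hx : ‖x‖ < 1) :
    HasSum (fun p : {p : ℕ+ × ℕ+ | 2 * (p.2 : ℕ) ≤ p.1} => x ^ (p.1.1 : ℕ) * y ^ (p.1.2 : ℕ))
      ((1 - x ^ 2 * y)⁻¹ * (1 - x)⁻¹ * (x ^ 2 * y)) := by
  refine hasSum_subtype_of_parametrization_of_geometric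
    (f := fun p : ℕ+ × ℕ+ => x ^ (p.1 : ℕ) * y ^ (p.2 : ℕ))
    (g := fun q => ((2 * q.1 + q.2 + 1).succPNat, q.1.succPNat)) ?injective ?range ?monomial hxxy hx
  case injective =>
    rintro ⟨i, j⟩ ⟨k, l⟩ h
    simp only [Prod.mk.injEq, Nat.succPNat_inj] at h ⊢
    omega
  case range =>
    refine Subset.antisymm (range_subset_iff.mpr fun q => ?_) fun ⟨X, Y⟩ hXY => ?_
    · simp only [mem_ofPred_eq, Nat.succPNat_coe]
      omega
    · have hY := Y.pos
      have hle : 2 * (Y : ℕ) ≤ X := hXY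
      refine ⟨((Y : ℕ) - 1, X - 2 * Y), Prod.ext (PNat.eq ?_) (PNat.eq ?_)⟩ <;>
        simp only [Nat.succPNat_coe] <;> omega
  case monomial =>
    intro i j
    simp only [Nat.succPNat_coe, Nat.succ_eq_add_one]
    ring

end Cones

/-- The summand `a ^ X * b ^ Y * c ^ (min X Y + min X (2 * Y))` of the double series, as a function
of the pair `(X, Y)` of positive integers. -/
def minTerm {M : Type*} [Monoid M] (a b c : M) (p : ℕ+ × ℕ+) : M :=
  a ^ (p.1 : ℕ) * b ^ (p.2 : ℕ) * c ^ (min (p.1 : ℕ) (p.2 : ℕ) + min (p.1 : ℕ) (2 * (p.2 : ℕ)))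

section MinTermMonomial

variable {M : Type*} [CommMonoid M] (a b c : M) {p : ℕ+ × ℕ+}

lemma minTerm_of_le (h : (p.1 : ℕ) ≤ p.2) :
    minTerm a b c p = (a * c ^ 2) ^ (p.1 : ℕ) * b ^ (p.2 : ℕ) := by
  rw [minTerm, min_eq_left h, min_eq_left (by omega), ← two_mul, pow_mul, mul_pow, mul_right_comm]

lemma minTerm_of_le_of_le_two_mul (h₁ : (p.2 : ℕ) ≤ p.1) (h₂ : (p.1 : ℕ) ≤ 2 * p.2) :
    minTerm a b c p = (a * c) ^ (p.1 : ℕ) * (b * c) ^ (p.2 : ℕ) := by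
  rw [minTerm, min_eq_right h₁, min_eq_left h₂, add_comm, pow_add, mul_pow, mul_pow,
    mul_mul_mul_comm]

lemma minTerm_of_two_mul_le (h : 2 * (p.2 : ℕ) ≤ p.1) :
    minTerm a b c p = a ^ (p.1 : ℕ) * (b * c ^ 3) ^ (p.2 : ℕ) := by
  rw [minTerm, min_eq_right (by omega), min_eq_right h, ← one_add_mul, pow_mul, mul_pow, mul_assoc]

end MinTermMonomial

section MinTermSum

variable {𝕜 : Type*} [NormedField 𝕜] {a b c : 𝕜}

lemma hasSum_minTerm_of_le (hu : ‖a * b * c ^ 2‖ < 1) (hb : ‖b‖ < 1) :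
    HasSum (fun p : {p : ℕ+ × ℕ+ | (p.1 : ℕ) ≤ p.2} => minTerm a b c p)
      ((1 - a * b * c ^ 2)⁻¹ * (1 - b)⁻¹ * (a * b * c ^ 2)) := by
  have hxy : a * c ^ 2 * b = a * b * c ^ 2 := mul_right_comm a (c ^ 2) b
  rw [← hxy] at hu ⊢
  exact (hasSum_pow_mul_pow_of_le hu hb).congr_fun fun p => minTerm_of_le a b c p.2

lemma hasSum_minTerm_of_lt_of_lt_two_mul (hv : ‖a ^ 2 * b * c ^ 3‖ < 1)
    (hu : ‖a * b * c ^ 2‖ < 1) :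
    HasSum (fun p : {p : ℕ+ × ℕ+ | (p.2 : ℕ) < p.1 ∧ (p.1 : ℕ) < 2 * p.2} => minTerm a b c p)
      ((1 - a ^ 2 * b * c ^ 3)⁻¹ * (1 - a * b * c ^ 2)⁻¹ * (a ^ 3 * b ^ 2 * c ^ 5)) := by
  have hxxy : (a * c) ^ 2 * (b * c) = a ^ 2 * b * c ^ 3 := by ring
  have hxy : a * c * (b * c) = a * b * c ^ 2 := by ring
  have hvertex : (a * c) ^ 3 * (b * c) ^ 2 = a ^ 3 * b ^ 2 * c ^ 5 := by ring
  rw [← hxxy] at hv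
  rw [← hxy] at hu
  rw [← hxxy, ← hxy, ← hvertex]
  exact (hasSum_pow_mul_pow_of_lt_of_lt_two_mul hv hu).congr_fun fun p =>
    minTerm_of_le_of_le_two_mul a b c p.2.1.le p.2.2.le

lemma hasSum_minTerm_of_two_mul_le (hv : ‖a ^ 2 * b * c ^ 3‖ < 1) (ha : ‖a‖ < 1) :
    HasSum (fun p : {p : ℕ+ × ℕ+ | 2 * (p.2 : ℕ) ≤ p.1} => minTerm a b c p)
      ((1 - a ^ 2 * b * c ^ 3)⁻¹ * (1 - a)⁻¹ * (a ^ 2 * b * c ^ 3)) := by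
  have hxxy : a ^ 2 * (b * c ^ 3) = a ^ 2 * b * c ^ 3 := (mul_assoc _ _ _).symm
  rw [← hxxy] at hv ⊢
  exact (hasSum_pow_mul_pow_of_two_mul_le hv ha).congr_fun fun p => minTerm_of_two_mul_le a b c p.2

end MinTermSum

lemma sum_cone_contributions_eq {K : Type*} [Field K] {a b c : K}
    (ha : 1 - a ≠ 0) (hb : 1 - b ≠ 0) (hu : 1 - a * b * c ^ 2 ≠ 0)
    (hv : 1 - a ^ 2 * b * c ^ 3 ≠ 0) :
    (1 - a * b * c ^ 2)⁻¹ * (1 - b)⁻¹ * (a * b * c ^ 2) +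
        (1 - a ^ 2 * b * c ^ 3)⁻¹ * (1 - a * b * c ^ 2)⁻¹ * (a ^ 3 * b ^ 2 * c ^ 5) +
        (1 - a ^ 2 * b * c ^ 3)⁻¹ * (1 - a)⁻¹ * (a ^ 2 * b * c ^ 3) =
      a * b * c ^ 2 *
          (1 - a + a * c - a * b * c - a ^ 2 * b * c ^ 3 + a ^ 3 * b ^ 2 * c ^ 3) /
        ((1 - a) * (1 - b) * (1 - a * b * c ^ 2) * (1 - a ^ 2 * b * c ^ 3)) := by
  field_simp
  ring

theorem heisenberg_sum_min_XY_plus_min_X_2Y_general {𝕜 : Type*} [NormedField 𝕜] {a b c : 𝕜}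
    (ha : ‖a‖ < 1) (hb : ‖b‖ < 1) (hu : ‖a * b * c ^ 2‖ < 1) (hv : ‖a ^ 2 * b * c ^ 3‖ < 1) :
    HasSum
      (fun p : ℕ+ × ℕ+ =>
        a ^ (p.1 : ℕ) * b ^ (p.2 : ℕ) *
          c ^ (min (p.1 : ℕ) (p.2 : ℕ) + min (p.1 : ℕ) (2 * (p.2 : ℕ))))
      (a * b * c ^ 2 *
          (1 - a + a * c - a * b * c - a ^ 2 * b * c ^ 3 + a ^ 3 * b ^ 2 * c ^ 3) /
        ((1 - a) * (1 - b) * (1 - a * b * c ^ 2) * (1 - a ^ 2 * b * c ^ 3))) := by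
  rw [← sum_cone_contributions_eq (isUnit_one_sub_of_norm_lt_one ha).ne_zero
    (isUnit_one_sub_of_norm_lt_one hb).ne_zero (isUnit_one_sub_of_norm_lt_one hu).ne_zero
    (isUnit_one_sub_of_norm_lt_one hv).ne_zero]
  exact hasSum_of_hasSum_cones (f := minTerm a b c) (hasSum_minTerm_of_le hu hb)
    (hasSum_minTerm_of_lt_of_lt_two_mul hv hu) (hasSum_minTerm_of_two_mul_le hv ha)

section LtOne

variable {R : Type*} [CommRing R] [LinearOrder R] [IsStrictOrderedRing R] {a b c : R}

lemma mul_mul_sq_lt_one (ha0 : 0 ≤ a) (hb1 : b ≤ 1) (hac : a * c ^ 2 < 1) :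
    a * b * c ^ 2 < 1 := by
  rw [mul_right_comm]
  exact mul_lt_one_of_nonneg_of_lt_one_left (by positivity) hac hb1

lemma sq_mul_cube_lt_one (ha0 : 0 ≤ a) (ha1 : a < 1) (hac : a * c ^ 2 < 1) :
    a ^ 2 * c ^ 3 < 1 := by
  refine lt_of_pow_lt_pow_left₀ 2 zero_le_one ?_
  calc (a ^ 2 * c ^ 3) ^ 2 = a * (a * c ^ 2) ^ 3 := by ring
    _ < 1 := mul_lt_one_of_nonneg_of_lt_one_left ha0 ha1 (pow_le_one₀ (by positivity) hac.le)
    _ = 1 ^ 2 := (one_pow 2).symm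

lemma sq_mul_mul_cube_lt_one (ha0 : 0 ≤ a) (ha1 : a < 1) (hb1 : b ≤ 1) (hc : 0 ≤ c)
    (hac : a * c ^ 2 < 1) : a ^ 2 * b * c ^ 3 < 1 := by
  rw [mul_right_comm]
  exact mul_lt_one_of_nonneg_of_lt_one_left (by positivity) (sq_mul_cube_lt_one ha0 ha1 hac) hb1

end LtOne

/-- Lemma 2.3(3): ∑_{X,Y≥1} a^X b^Y c^{min(X,Y)+min(X,2Y)}
    = abc²(1-a+ac-abc-a²bc³+a³b²c³)/((1-a)(1-b)(1-abc²)(1-a²bc³)). -/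
theorem heisenberg_sum_min_XY_plus_min_X_2Y (a b c : ℝ) (ha0 : 0 < a) (ha1 : a < 1)
    (hb0 : 0 < b) (hb1 : b < 1) (hc : 0 < c) (hac : a * c ^ 2 < 1) :
    HasSum
      (fun p : ℕ+ × ℕ+ =>
        a ^ (p.1 : ℕ) * b ^ (p.2 : ℕ) *
          c ^ (min (p.1 : ℕ) (p.2 : ℕ) + min (p.1 : ℕ) (2 * (p.2 : ℕ))))
      (a * b * c ^ 2 *
          (1 - a + a * c - a * b * c - a ^ 2 * b * c ^ 3 + a ^ 3 * b ^ 2 * c ^ 3) /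
        ((1 - a) * (1 - b) * (1 - a * b * c ^ 2) * (1 - a ^ 2 * b * c ^ 3))) := by
  apply heisenberg_sum_min_XY_plus_min_X_2Y_general <;> rw [Real.norm_of_nonneg (by positivity)]
  exacts [ha1, hb1, mul_mul_sq_lt_one ha0.le hb1.le hac,
    sq_mul_mul_cube_lt_one ha0.le ha1 hb1.le hc.le hac]
end

section
/- Let a, b, c be real numbers with 0 < a < 1, 0 < b < 1, c > 0, and a·c < 1. Then the series ∑ a^X · b^Y · c^{min(X,2Y)}, taken over all pairs of positive integers (X,Y) with X > Y, converges and equals a²·b·c²·(1 − a²·b·c) / ((1 − a²·b·c²)·(1 − a)·(1 − a·b·c)). -/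
/-!
The rays through `(1, 0)`, `(2, 1)` and `(1, 1)` cut the cone `X > Y ≥ 1` into two unimodular cones,
on each of which `min X (2 * Y)` is linear. The summand is therefore multiplicative along these
rays, with weights `a`, `q = a²bc²` and `r = abc` respectively, and the series becomes
`∑_{m ≥ 1, k ≥ 0} q ^ m * a ^ k + ∑_{m ≥ 1, n ≥ 1} q ^ m * r ^ n`.
-/

/-- The decomposition of the pairs `X > Y ≥ 1` along the line `X = 2 * Y`. The left summand
parametrizes `2 * Y ≤ X` by `(X, Y) = (m + 1) • (2, 1) + k • (1, 0)`, the right summand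
parametrizes `X < 2 * Y` by `(X, Y) = (m + 1) • (2, 1) + (n + 1) • (1, 1)`. -/
def gtPairEquiv : (ℕ × ℕ) ⊕ (ℕ × ℕ) ≃ {p : ℕ+ × ℕ+ // (p.2 : ℕ) < (p.1 : ℕ)} where
  toFun
    | .inl (m, k) => ⟨(⟨2 * (m + 1) + k, by omega⟩, ⟨m + 1, by omega⟩), by
        simp only [PNat.mk_coe]; omega⟩
    | .inr (m, n) => ⟨(⟨2 * (m + 1) + (n + 1), by omega⟩, ⟨(m + 1) + (n + 1), by omega⟩), by
        simp only [PNat.mk_coe]; omega⟩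
  invFun p :=
    if 2 * (p.1.2 : ℕ) ≤ p.1.1 then .inl (p.1.2 - 1, p.1.1 - 2 * p.1.2)
    else .inr (p.1.1 - p.1.2 - 1, 2 * p.1.2 - p.1.1 - 1)
  left_inv := by
    rintro (⟨m, k⟩ | ⟨m, n⟩)
    · refine (if_pos ?_).trans (congrArg Sum.inl (Prod.ext ?_ ?_)) <;>
        dsimp only [PNat.mk_coe] <;> omega
    · refine (if_neg ?_).trans (congrArg Sum.inr (Prod.ext ?_ ?_)) <;>
        dsimp only [PNat.mk_coe] <;> omega
  right_inv := by
    rintro ⟨⟨X, Y⟩, hYX⟩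
    have hY : 0 < (Y : ℕ) := Y.pos
    dsimp only at hYX ⊢
    rw [Subtype.ext_iff, Prod.ext_iff, ← PNat.coe_inj, ← PNat.coe_inj]
    split_ifs <;> dsimp only [PNat.mk_coe] <;> omega

section CommMonoid

variable {M : Type*} [CommMonoid M] (a b c : M)

theorem pow_mul_pow_mul_pow_min_two_mul_add (m k : ℕ) :
    a ^ (2 * m + k) * b ^ m * c ^ min (2 * m + k) (2 * m) = (a ^ 2 * b * c ^ 2) ^ m * a ^ k := by
  rw [min_eq_right (Nat.le_add_right _ _)]
  simp only [mul_pow, ← pow_mul, pow_add]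
  ac_rfl

theorem pow_mul_pow_add_mul_pow_min_two_mul_add (m n : ℕ) :
    a ^ (2 * m + n) * b ^ (m + n) * c ^ min (2 * m + n) (2 * (m + n)) =
      (a ^ 2 * b * c ^ 2) ^ m * (a * b * c) ^ n := by
  rw [min_eq_left (by omega)]
  simp only [mul_pow, ← pow_mul, pow_add]
  ac_rfl

end CommMonoid

theorem mul_inv_one_sub_add_mul_inv_one_sub {F : Type*} [Field F] (q : F) {x y : F}
    (hx : 1 - x ≠ 0) (hy : 1 - y ≠ 0) :
    q * ((1 - q)⁻¹ * (1 - x)⁻¹) + q * ((1 - q)⁻¹ * (1 - y)⁻¹) * y =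
      q * (1 - x * y) / ((1 - q) * (1 - x) * (1 - y)) := by
  field_simp
  ring

section NormedDivisionRing

variable {D : Type*} [NormedDivisionRing D] [CompleteSpace D] {x y : D}

theorem hasSum_pow_mul_pow (hx : ‖x‖ < 1) (hy : ‖y‖ < 1) :
    HasSum (fun p : ℕ × ℕ => x ^ p.1 * y ^ p.2) ((1 - x)⁻¹ * (1 - y)⁻¹) :=
  (hasSum_geometric_of_norm_lt_one hx).mul (hasSum_geometric_of_norm_lt_one hy)
    (summable_mul_of_summable_norm (summable_norm_geometric_of_norm_lt_one hx)
      (summable_norm_geometric_of_norm_lt_one hy))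

theorem hasSum_pow_succ_mul_pow (hx : ‖x‖ < 1) (hy : ‖y‖ < 1) :
    HasSum (fun p : ℕ × ℕ => x ^ (p.1 + 1) * y ^ p.2) (x * ((1 - x)⁻¹ * (1 - y)⁻¹)) := by
  simpa only [pow_succ', mul_assoc] using (hasSum_pow_mul_pow hx hy).mul_left x

theorem hasSum_pow_succ_mul_pow_succ (hx : ‖x‖ < 1) (hy : ‖y‖ < 1) :
    HasSum (fun p : ℕ × ℕ => x ^ (p.1 + 1) * y ^ (p.2 + 1))
      (x * ((1 - x)⁻¹ * (1 - y)⁻¹) * y) := by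
  simpa only [pow_succ, mul_assoc] using (hasSum_pow_succ_mul_pow hx hy).mul_right y

end NormedDivisionRing

section NormedField

variable {𝕜 : Type*} [NormedField 𝕜] {a b c : 𝕜}

theorem norm_mul_mul_lt_one (hb : ‖b‖ ≤ 1) (hac : ‖a * c‖ < 1) : ‖a * b * c‖ < 1 := by
  rw [mul_right_comm, norm_mul]
  exact mul_lt_one_of_nonneg_of_lt_one_left (norm_nonneg _) hac hb

theorem norm_sq_mul_mul_sq_lt_one (hb : ‖b‖ ≤ 1) (hac : ‖a * c‖ < 1) :
    ‖a ^ 2 * b * c ^ 2‖ < 1 := by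
  rw [show a ^ 2 * b * c ^ 2 = a * c * (a * b * c) by ring, norm_mul]
  exact mul_lt_one_of_nonneg_of_lt_one_left (norm_nonneg _) hac (norm_mul_mul_lt_one hb hac).le

theorem heisenberg_sum_min_X_2Y_X_gt_Y_general [CompleteSpace 𝕜] (ha : ‖a‖ < 1)
    (habc : ‖a * b * c‖ < 1) (hq : ‖a ^ 2 * b * c ^ 2‖ < 1) :
    HasSum
      (fun p : {p : ℕ+ × ℕ+ // (p.2 : ℕ) < (p.1 : ℕ)} =>
        a ^ (p.1.1 : ℕ) * b ^ (p.1.2 : ℕ) * c ^ min (p.1.1 : ℕ) (2 * (p.1.2 : ℕ)))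
      (a ^ 2 * b * c ^ 2 * (1 - a ^ 2 * b * c) /
        ((1 - a ^ 2 * b * c ^ 2) * (1 - a) * (1 - a * b * c))) := by
  have hfar := hasSum_pow_succ_mul_pow hq ha
  have hnear := hasSum_pow_succ_mul_pow_succ hq habc
  simp only [← pow_mul_pow_mul_pow_min_two_mul_add] at hfar
  simp only [← pow_mul_pow_add_mul_pow_min_two_mul_add] at hnear
  rw [← gtPairEquiv.hasSum_iff, show a ^ 2 * b * c = a * (a * b * c) by ring,
    ← mul_inv_one_sub_add_mul_inv_one_sub _ (isUnit_one_sub_of_norm_lt_one ha).ne_zero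
      (isUnit_one_sub_of_norm_lt_one habc).ne_zero]
  exact HasSum.sum hfar hnear

end NormedField

/-- The part of Lemma 2.3(2) with X > Y:
    ∑_{X>Y≥1} a^X b^Y c^{min(X,2Y)} = a²bc²(1-a²bc)/((1-a²bc²)(1-a)(1-abc)). -/
theorem heisenberg_sum_min_X_2Y_X_gt_Y (a b c : ℝ) (ha0 : 0 < a) (ha1 : a < 1)
    (hb0 : 0 < b) (hb1 : b < 1) (hc : 0 < c) (hac : a * c < 1) :
    HasSum
      (fun p : {p : ℕ+ × ℕ+ // (p.2 : ℕ) < (p.1 : ℕ)} =>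
        a ^ (p.1.1 : ℕ) * b ^ (p.1.2 : ℕ) * c ^ min (p.1.1 : ℕ) (2 * (p.1.2 : ℕ)))
      (a ^ 2 * b * c ^ 2 * (1 - a ^ 2 * b * c) /
        ((1 - a ^ 2 * b * c ^ 2) * (1 - a) * (1 - a * b * c))) := by
  rw [← Real.norm_of_nonneg ha0.le] at ha1
  rw [← Real.norm_of_nonneg hb0.le] at hb1
  rw [← Real.norm_of_nonneg (mul_pos ha0 hc).le] at hac
  exact heisenberg_sum_min_X_2Y_X_gt_Y_general ha1 (norm_mul_mul_lt_one hb1.le hac)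
    (norm_sq_mul_mul_sq_lt_one hb1.le hac)
end

section
/- Let q and t be real numbers with q > 1, t > 0, and q³·t < 1. Then the double series ∑_{X≥1} ∑_{Y≥1} q^{3X − 2Y} · t^{3X − min(X,Y) − min(X,2Y)} converges and satisfies q⁻¹·(1 − q⁻¹)³ · ∑_{X≥1} ∑_{Y≥1} q^{3X − 2Y} · t^{3X − min(X,Y) − min(X,2Y)} = (1 − q⁻¹)³ · t·(1 − q³·t³ + q³·t² − q·t² − q⁴·t³ + q⁵·t⁶) / ((1 − q⁻²)·(1 − q·t)·(1 − q³·t³)·(1 − q⁴·t³)). -/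
/-!
The two minima in the exponent of `t` are linear on each of the cones `X ≤ Y`, `Y < X ≤ 2 * Y` and
`2 * Y < X`. Each cone is the set of points `v + m • e + n • f` with `m n : ℕ`, for an apex `v` and
a unimodular pair of generators `e`, `f`, so the series restricts there to a double geometric
series: the summand at `v` is its leading coefficient, and the monomials attached to the directions
`e` and `f` are its ratios. For `1 < ‖q‖` all ratios have norm less than one as soon as
`‖q ^ 4 * t ^ 3‖ < 1`.
-/

section Cones

/-- The cone `X ≤ Y` of the positive quadrant, with apex `(1, 1)` and generators `(1, 1)`,
`(0, 1)`. -/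
def lowerCone (p : ℕ × ℕ) : ℕ+ × ℕ+ :=
  (⟨p.1 + 1, by omega⟩, ⟨p.1 + p.2 + 1, by omega⟩)

/-- The cone `Y < X ≤ 2 * Y` of the positive quadrant, with apex `(2, 1)` and generators `(2, 1)`,
`(1, 1)`. -/
def middleCone (p : ℕ × ℕ) : ℕ+ × ℕ+ :=
  (⟨2 * p.1 + p.2 + 2, by omega⟩, ⟨p.1 + p.2 + 1, by omega⟩)

/-- The cone `2 * Y < X` of the positive quadrant, with apex `(3, 1)` and generators `(2, 1)`,
`(1, 0)`. -/
def upperCone (p : ℕ × ℕ) : ℕ+ × ℕ+ :=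
  (⟨2 * p.1 + p.2 + 3, by omega⟩, ⟨p.1 + 1, by omega⟩)

lemma injective_sumElim_cones :
    Function.Injective (Sum.elim lowerCone (Sum.elim middleCone upperCone)) := by
  intro x y h
  rw [Prod.ext_iff, ← PNat.coe_inj, ← PNat.coe_inj] at h
  rcases x with ⟨a, b⟩ | ⟨a, b⟩ | ⟨a, b⟩ <;> rcases y with ⟨c, d⟩ | ⟨c, d⟩ | ⟨c, d⟩ <;>
    simp only [Sum.elim_inl, Sum.elim_inr, lowerCone, middleCone, upperCone, PNat.mk_coe,
      Prod.mk.injEq, Sum.inl.injEq, Sum.inr.injEq, reduceCtorEq] at h ⊢ <;>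
    omega

lemma surjective_sumElim_cones :
    Function.Surjective (Sum.elim lowerCone (Sum.elim middleCone upperCone)) := by
  rintro ⟨⟨X, hX⟩, ⟨Y, hY⟩⟩
  rcases le_or_gt X Y with hXY | hYX
  · refine ⟨.inl (X - 1, Y - X), Prod.ext (PNat.eq ?_) (PNat.eq ?_)⟩ <;>
      simp only [Sum.elim_inl, lowerCone, PNat.mk_coe] <;> omega
  rcases le_or_gt X (2 * Y) with hX2Y | h2YX
  · refine ⟨.inr (.inl (X - Y - 1, 2 * Y - X)), Prod.ext (PNat.eq ?_) (PNat.eq ?_)⟩ <;>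
      simp only [Sum.elim_inl, Sum.elim_inr, middleCone, PNat.mk_coe] <;> omega
  · refine ⟨.inr (.inr (Y - 1, X - 2 * Y - 1)), Prod.ext (PNat.eq ?_) (PNat.eq ?_)⟩ <;>
      simp only [Sum.elim_inr, upperCone, PNat.mk_coe] <;> omega

lemma hasSum_of_cones {M : Type*} [AddCommMonoid M] [TopologicalSpace M] [ContinuousAdd M]
    {f : ℕ+ × ℕ+ → M} {a b c : M} (ha : HasSum (f ∘ lowerCone) a)
    (hb : HasSum (f ∘ middleCone) b) (hc : HasSum (f ∘ upperCone) c) :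
    HasSum f (a + (b + c)) :=
  (Equiv.ofBijective _ ⟨injective_sumElim_cones, surjective_sumElim_cones⟩).hasSum_iff.mp
    (HasSum.sum ha (HasSum.sum hb hc))

end Cones

section Summand

variable {K : Type*} [Field K]

/-- The summand of the series over `(X, Y)` that computes `𝒵₃₁`, where `t` stands for `q⁻ˢ`. -/
def z31Term (q t : K) (p : ℕ+ × ℕ+) : K :=
  q ^ (3 * ((p.1 : ℕ) : ℤ) - 2 * ((p.2 : ℕ) : ℤ)) *
    t ^ (3 * ((p.1 : ℕ) : ℤ) - min ((p.1 : ℕ) : ℤ) ((p.2 : ℕ) : ℤ) -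
      min ((p.1 : ℕ) : ℤ) (2 * ((p.2 : ℕ) : ℤ)))

lemma z31Term_lowerCone {q : K} (hq : q ≠ 0) (t : K) (m n : ℕ) :
    z31Term q t (lowerCone (m, n)) = q * t * ((q * t) ^ m * (q⁻¹ ^ 2) ^ n) := by
  have hqexp : 3 * ((m + 1 : ℕ) : ℤ) - 2 * ((m + n + 1 : ℕ) : ℤ) =
      ((m + 1 : ℕ) : ℤ) - ((2 * n : ℕ) : ℤ) := by omega
  have htexp : 3 * ((m + 1 : ℕ) : ℤ) - min ((m + 1 : ℕ) : ℤ) ((m + n + 1 : ℕ) : ℤ) -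
      min ((m + 1 : ℕ) : ℤ) (2 * ((m + n + 1 : ℕ) : ℤ)) = ((m + 1 : ℕ) : ℤ) := by omega
  simp only [z31Term, lowerCone, PNat.mk_coe]
  rw [hqexp, htexp, zpow_sub₀ hq, zpow_natCast, zpow_natCast, zpow_natCast]
  ring

lemma z31Term_middleCone (q t : K) (m n : ℕ) :
    z31Term q t (middleCone (m, n)) =
      q ^ 4 * t ^ 3 * ((q ^ 4 * t ^ 3) ^ m * (q * t) ^ n) := by
  have hqexp : 3 * ((2 * m + n + 2 : ℕ) : ℤ) - 2 * ((m + n + 1 : ℕ) : ℤ) =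
      ((4 * m + n + 4 : ℕ) : ℤ) := by omega
  have htexp : 3 * ((2 * m + n + 2 : ℕ) : ℤ) -
      min ((2 * m + n + 2 : ℕ) : ℤ) ((m + n + 1 : ℕ) : ℤ) -
      min ((2 * m + n + 2 : ℕ) : ℤ) (2 * ((m + n + 1 : ℕ) : ℤ)) =
        ((3 * m + n + 3 : ℕ) : ℤ) := by omega
  simp only [z31Term, middleCone, PNat.mk_coe]
  rw [hqexp, htexp, zpow_natCast, zpow_natCast]
  ring

lemma z31Term_upperCone (q t : K) (m n : ℕ) :
    z31Term q t (upperCone (m, n)) =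
      q ^ 7 * t ^ 6 * ((q ^ 4 * t ^ 3) ^ m * (q ^ 3 * t ^ 3) ^ n) := by
  have hqexp : 3 * ((2 * m + n + 3 : ℕ) : ℤ) - 2 * ((m + 1 : ℕ) : ℤ) =
      ((4 * m + 3 * n + 7 : ℕ) : ℤ) := by omega
  have htexp : 3 * ((2 * m + n + 3 : ℕ) : ℤ) -
      min ((2 * m + n + 3 : ℕ) : ℤ) ((m + 1 : ℕ) : ℤ) -
      min ((2 * m + n + 3 : ℕ) : ℤ) (2 * ((m + 1 : ℕ) : ℤ)) =
        ((3 * m + 3 * n + 6 : ℕ) : ℤ) := by omega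
  simp only [z31Term, upperCone, PNat.mk_coe]
  rw [hqexp, htexp, zpow_natCast, zpow_natCast]
  ring

lemma z31_cone_sums_add {q t : K} (hq : q ≠ 0) (hq2 : 1 - q⁻¹ ^ 2 ≠ 0) (hqt : 1 - q * t ≠ 0)
    (hq3t3 : 1 - q ^ 3 * t ^ 3 ≠ 0) (hq4t3 : 1 - q ^ 4 * t ^ 3 ≠ 0) :
    q * t * ((1 - q * t)⁻¹ * (1 - q⁻¹ ^ 2)⁻¹) +
        (q ^ 4 * t ^ 3 * ((1 - q ^ 4 * t ^ 3)⁻¹ * (1 - q * t)⁻¹) +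
          q ^ 7 * t ^ 6 * ((1 - q ^ 4 * t ^ 3)⁻¹ * (1 - q ^ 3 * t ^ 3)⁻¹)) =
      q * (t * (1 - q ^ 3 * t ^ 3 + q ^ 3 * t ^ 2 - q * t ^ 2 - q ^ 4 * t ^ 3 + q ^ 5 * t ^ 6) /
        ((1 - q⁻¹ ^ 2) * (1 - q * t) * (1 - q ^ 3 * t ^ 3) * (1 - q ^ 4 * t ^ 3))) := by
  have huq : q⁻¹ ^ 2 * q ^ 2 = 1 := by rw [← mul_pow, inv_mul_cancel₀ hq, one_pow]
  generalize q⁻¹ ^ 2 = u at hq2 huq ⊢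
  field_simp
  linear_combination (q ^ 5 * t ^ 7 - q * t ^ 3) * huq

end Summand

section Convergence

lemma hasSum_geometric_mul_geometric {𝕜 : Type*} [NormedDivisionRing 𝕜] {x y : 𝕜}
    (hx : ‖x‖ < 1) (hy : ‖y‖ < 1) (c : 𝕜) :
    HasSum (fun p : ℕ × ℕ => c * (x ^ p.1 * y ^ p.2)) (c * ((1 - x)⁻¹ * (1 - y)⁻¹)) :=
  ((hasSum_geometric_of_norm_lt_one hx).mul (hasSum_geometric_of_norm_lt_one hy)
    (summable_mul_of_summable_norm'
      (summable_norm_geometric_of_norm_lt_one hx) (summable_geometric_of_norm_lt_one hx)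
      (summable_norm_geometric_of_norm_lt_one hy)
      (summable_geometric_of_norm_lt_one hy))).mul_left c

variable {𝕜 : Type*} [NormedField 𝕜]

lemma norm_mul_lt_one_of_norm_pow_mul_pow_lt_one {q t : 𝕜} (hq : 1 ≤ ‖q‖)
    (hq4t3 : ‖q ^ 4 * t ^ 3‖ < 1) : ‖q * t‖ < 1 := by
  refine (pow_lt_one_iff_of_nonneg (norm_nonneg _) three_ne_zero).mp ?_
  calc ‖q * t‖ ^ 3 ≤ ‖q‖ * ‖q * t‖ ^ 3 := le_mul_of_one_le_left (by positivity) hq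
    _ = ‖q ^ 4 * t ^ 3‖ := by rw [← norm_pow, ← norm_mul]; congr 1; ring
    _ < 1 := hq4t3

theorem heisenberg_Z31_general {q t : 𝕜} (hq : 1 < ‖q‖) (hq4t3 : ‖q ^ 4 * t ^ 3‖ < 1) :
    HasSum (z31Term q t)
      (q * (t * (1 - q ^ 3 * t ^ 3 + q ^ 3 * t ^ 2 - q * t ^ 2 - q ^ 4 * t ^ 3 + q ^ 5 * t ^ 6) /
        ((1 - q⁻¹ ^ 2) * (1 - q * t) * (1 - q ^ 3 * t ^ 3) * (1 - q ^ 4 * t ^ 3)))) := by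
  have hq0 : q ≠ 0 := norm_pos_iff.mp (one_pos.trans hq)
  have hq2 : ‖q⁻¹ ^ 2‖ < 1 := by
    rw [norm_pow, norm_inv]
    exact pow_lt_one₀ (by positivity) (inv_lt_one_of_one_lt₀ hq) two_ne_zero
  have hqt : ‖q * t‖ < 1 := norm_mul_lt_one_of_norm_pow_mul_pow_lt_one hq.le hq4t3
  have hq3t3 : ‖q ^ 3 * t ^ 3‖ < 1 := by
    rw [← mul_pow, norm_pow]
    exact pow_lt_one₀ (norm_nonneg _) hqt three_ne_zero
  rw [← z31_cone_sums_add hq0 (isUnit_one_sub_of_norm_lt_one hq2).ne_zero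
    (isUnit_one_sub_of_norm_lt_one hqt).ne_zero (isUnit_one_sub_of_norm_lt_one hq3t3).ne_zero
    (isUnit_one_sub_of_norm_lt_one hq4t3).ne_zero]
  refine hasSum_of_cones ?lower ?middle ?upper
  case lower =>
    exact (hasSum_geometric_mul_geometric hqt hq2 _).congr_fun
      fun p => z31Term_lowerCone hq0 t p.1 p.2
  case middle =>
    exact (hasSum_geometric_mul_geometric hq4t3 hqt _).congr_fun
      fun p => z31Term_middleCone q t p.1 p.2
  case upper =>
    exact (hasSum_geometric_mul_geometric hq4t3 hq3t3 _).congr_fun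
      fun p => z31Term_upperCone q t p.1 p.2

end Convergence

/-- The computation of 𝒵₃₁:
    q⁻¹(1-q⁻¹)³·∑_{X,Y≥1} q^{3X-2Y} t^{3X-min(X,Y)-min(X,2Y)}
    = (1-q⁻¹)³·t(1-q³t³+q³t²-qt²-q⁴t³+q⁵t⁶)/((1-q⁻²)(1-qt)(1-q³t³)(1-q⁴t³)). -/
theorem heisenberg_Z31 (q t : ℝ) (hq : 1 < q) (ht : 0 < t) (hqt : q ^ 3 * t < 1) :
    ∃ S : ℝ,
      HasSum
        (fun p : ℕ+ × ℕ+ =>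
          q ^ (3 * ((p.1 : ℕ) : ℤ) - 2 * ((p.2 : ℕ) : ℤ)) *
            t ^ (3 * ((p.1 : ℕ) : ℤ) - min ((p.1 : ℕ) : ℤ) ((p.2 : ℕ) : ℤ) -
              min ((p.1 : ℕ) : ℤ) (2 * ((p.2 : ℕ) : ℤ))))
        S ∧
      q⁻¹ * (1 - q⁻¹) ^ 3 * S =
        (1 - q⁻¹) ^ 3 *
          (t * (1 - q ^ 3 * t ^ 3 + q ^ 3 * t ^ 2 - q * t ^ 2 - q ^ 4 * t ^ 3 +
              q ^ 5 * t ^ 6) /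
            ((1 - q⁻¹ ^ 2) * (1 - q * t) * (1 - q ^ 3 * t ^ 3) *
              (1 - q ^ 4 * t ^ 3))) := by
  have hq4t3 : ‖q ^ 4 * t ^ 3‖ < 1 := by
    rw [Real.norm_of_nonneg (by positivity)]
    calc q ^ 4 * t ^ 3 ≤ q ^ 9 * t ^ 3 := by gcongr <;> [exact hq.le; norm_num]
      _ = (q ^ 3 * t) ^ 3 := by ring
      _ < 1 := pow_lt_one₀ (by positivity) hqt three_ne_zero
  refine ⟨_, heisenberg_Z31_general (hq.trans_le (le_abs_self q)) hq4t3, ?_⟩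
  rw [mul_right_comm, inv_mul_cancel_left₀ (by positivity), mul_comm]
end

section
/- Let q and t be real numbers with q > 1, t > 0, and q³·t < 1. Then the triple series ∑_{X≥1} ∑_{Y≥1} ∑_{Z≥1} q^{3X − 2Y − 3Z} · t^{3X − min(X, Y+2Z) − min(X, 2Y+4Z)} converges and equals q⁻²·t/((1 − q⁻²)·(1 − q⁻³)·(1 − q·t)) + q·t²/((1 − q⁻³)·(1 − t)·(1 − q·t)) + q⁴·t³/((1 − t)·(1 − q·t)·(1 − q³·t²)) + q⁷·t⁵/((1 − q·t)·(1 − q³·t²)·(1 − q⁴·t³)) + q¹⁰·t⁷/((1 − q³·t²)·(1 − q⁴·t³)·(1 − q⁶·t⁴)) + q¹³·t⁹/((1 − q⁴·t³)·(1 − q⁹·t⁶)·(1 − q⁶·t⁴)) + q¹⁶·t¹²/((1 − q⁴·t³)·(1 − q³·t³)·(1 − q⁹·t⁶)). -/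
/-!
Let `f` be the summand. Where both minima are given by fixed linear forms, `f` is a monomial in `q`
and `t` with linear exponents, hence multiplicative. The planes `X = Y`, `X = Y + Z`,
`X = Y + 2Z`, `X = 2Y + 2Z`, `X = 2Y + 3Z` and `X = 2Y + 4Z` refine these domains of linearity so
that the positive lattice points split into seven unimodular simplicial cones. The cone with apex
`p` and generators `u`, `v`, `w` contributes a product of three geometric series, with sum
`f p / ((1 - f u) * (1 - f v) * (1 - f w))`. These converge because `‖f p‖ < 1` for every nonzero
`p : ℕ × ℕ × ℕ`, which only needs `1 < ‖q‖` and `‖q ^ 3 * t ^ 2‖ < 1`.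
-/

open Finset Function

theorem hasSum_iUnion_range_of_pairwise_disjoint {ι β γ α : Type*} [Fintype ι] [AddCommMonoid α]
    [TopologicalSpace α] [ContinuousAdd α] {f : γ → α} {e : ι → β → γ} {a : ι → α}
    (he : ∀ i, Injective (e i)) (hdisj : Pairwise (Disjoint on fun i => Set.range (e i)))
    (hf : ∀ i, HasSum (fun b => f (e i b)) (a i)) :
    HasSum (fun x : ⋃ i, Set.range (e i) => f x) (∑ i, a i) := by
  have hunion := hasSum_sum_disjoint univ (hdisj.set_pairwise _) fun i _ =>
    (he i).hasSum_range_iff.mpr (hf i)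
  have hcover : ⋃ i ∈ (univ : Finset ι), Set.range (e i) = ⋃ i, Set.range (e i) := by
    simp only [mem_univ, Set.iUnion_true]
  rwa [hcover] at hunion

theorem summable_norm_and_hasSum_prod {R : Type*} [NormedCommRing R] {d : ℕ}
    {β : Fin d → Type*} {f : ∀ i, β i → R} {a : Fin d → R} (hf : ∀ i, HasSum (f i) (a i))
    (hf_norm : ∀ i, Summable fun b => ‖f i b‖) :
    (Summable fun n : ∀ i, β i => ‖∏ i, f i (n i)‖) ∧
      HasSum (fun n : ∀ i, β i => ∏ i, f i (n i)) (∏ i, a i) := by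
  induction d with
  | zero =>
    simpa only [univ_eq_empty, prod_empty] using
      ⟨.of_finite, hasSum_unique fun _ : ∀ i, β i => (1 : R)⟩
  | succ d ih =>
    obtain ⟨htail_norm, htail⟩ := ih (fun i => hf i.succ) (fun i => hf_norm i.succ)
    have hprod_norm := (hf_norm 0).mul_norm htail_norm
    have hsummable :=
      summable_mul_of_summable_norm' (hf_norm 0) (hf 0).summable htail_norm htail.summable
    have hprod := (hf 0).mul htail hsummable
    simp only [← (Fin.consEquiv β).summable_iff, ← (Fin.consEquiv β).hasSum_iff, comp_def,
      Fin.consEquiv_apply, Fin.prod_univ_succ, Fin.cons_zero, Fin.cons_succ]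
    exact ⟨hprod_norm, hprod⟩

theorem hasSum_prod_geometric {𝕜 : Type*} [NormedField 𝕜] {d : ℕ} {x : Fin d → 𝕜}
    (hx : ∀ i, ‖x i‖ < 1) :
    HasSum (fun n : Fin d → ℕ => ∏ i, x i ^ n i) (∏ i, (1 - x i)⁻¹) :=
  (summable_norm_and_hasSum_prod (f := fun i n => x i ^ n)
    (fun i => hasSum_geometric_of_norm_lt_one (hx i))
    fun i => summable_norm_geometric_of_norm_lt_one (hx i)).2

section LatticeCone

variable {M : Type*} [AddCommMonoid M] {d : ℕ}

/-- The point with coordinates `n` in the lattice cone with apex `p` and generators `g`. -/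
def latticeConePoint (p : M) (g : Fin d → M) (n : Fin d → ℕ) : M :=
  p + ∑ i, n i • g i

theorem hasSum_latticeConePoint {𝕜 : Type*} [NormedField 𝕜] {f : M → 𝕜} {p : M} {g : Fin d → M}
    (hf : ∀ n, f (latticeConePoint p g n) = f p * ∏ i, f (g i) ^ n i)
    (hg : ∀ i, ‖f (g i)‖ < 1) :
    HasSum (fun n => f (latticeConePoint p g n)) (f p / ∏ i, (1 - f (g i))) := by
  simpa only [hf, div_eq_mul_inv, prod_inv_distrib] using
    (hasSum_prod_geometric hg).mul_left (f p)

end LatticeCone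

theorem zpow_sum_of_ne_zero {G₀ ι : Type*} [CommGroupWithZero G₀] {a : G₀} (ha : a ≠ 0)
    (s : Finset ι) (m : ι → ℤ) : a ^ ∑ i ∈ s, m i = ∏ i ∈ s, a ^ m i := by
  induction s using Finset.cons_induction with
  | empty => simp
  | cons i s hi ih => rw [sum_cons, prod_cons, zpow_add₀ ha, ih]

section Summand

/-- The exponent of `q` in the summand at `(X, Y, Z)`. -/
def qExponent : ℕ × ℕ × ℕ →+ ℤ where
  toFun p := 3 * p.1 - 2 * p.2.1 - 3 * p.2.2
  map_zero' := by simp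
  map_add' p r := by simp only [Prod.fst_add, Prod.snd_add, Nat.cast_add]; ring

/-- The exponent of `t` in the summand at `(X, Y, Z)`. It is at least `X`, so the subtractions of
natural numbers do not truncate. -/
def tExponent (p : ℕ × ℕ × ℕ) : ℕ :=
  3 * p.1 - min p.1 (p.2.1 + 2 * p.2.2) - min p.1 (2 * p.2.1 + 4 * p.2.2)

theorem tExponent_cast (p : ℕ × ℕ × ℕ) :
    (tExponent p : ℤ) =
      3 * p.1 - min (p.1 : ℤ) (p.2.1 + 2 * p.2.2) - min (p.1 : ℤ) (2 * p.2.1 + 4 * p.2.2) := by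
  unfold tExponent
  omega

variable {𝕜 : Type*} [NormedField 𝕜] {q t : 𝕜}

/-- The summand of the series, extended to `ℕ × ℕ × ℕ` because the generators of the cones have
vanishing coordinates. -/
def summand (q t : 𝕜) (p : ℕ × ℕ × ℕ) : 𝕜 :=
  q ^ qExponent p * t ^ tExponent p

theorem summand_latticeConePoint (hq : q ≠ 0) {d : ℕ} {p : ℕ × ℕ × ℕ} {g : Fin d → ℕ × ℕ × ℕ}
    {n : Fin d → ℕ}
    (ht : tExponent (latticeConePoint p g n) = tExponent p + ∑ i, n i * tExponent (g i)) :
    summand q t (latticeConePoint p g n) = summand q t p * ∏ i, summand q t (g i) ^ n i := by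
  have hq_pow : q ^ qExponent (latticeConePoint p g n) =
      q ^ qExponent p * ∏ i, (q ^ qExponent (g i)) ^ n i := by
    simp only [latticeConePoint, map_add, map_sum, map_nsmul, zpow_add₀ hq,
      zpow_sum_of_ne_zero hq, Int.nsmul_eq_mul, zpow_mul', zpow_natCast]
  have ht_pow : t ^ tExponent (latticeConePoint p g n) =
      t ^ tExponent p * ∏ i, (t ^ tExponent (g i)) ^ n i := by
    simp only [ht, pow_add, ← prod_pow_eq_pow_sum, pow_mul']
  simp only [summand, hq_pow, ht_pow, mul_pow, prod_mul_distrib]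
  exact mul_mul_mul_comm ..

theorem norm_zpow_mul_pow_lt_one (hq : 1 < ‖q‖) (hqt : ‖q ^ 3 * t ^ 2‖ < 1) {m : ℤ} {n : ℕ}
    (hmn : 2 * m ≤ 3 * n) (hne : m < 0 ∨ n ≠ 0) : ‖q ^ m * t ^ n‖ < 1 := by
  have hq0 : q ≠ 0 := norm_pos_iff.mp (zero_lt_one.trans hq)
  have hsq : (q ^ m * t ^ n) ^ 2 = q ^ (2 * m - 3 * n) * (q ^ 3 * t ^ 2) ^ n :=
    calc (q ^ m * t ^ n) ^ 2 = q ^ (2 * m - 3 * n + (3 * n : ℕ)) * t ^ (2 * n) := by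
          rw [mul_pow, ← zpow_natCast, ← zpow_mul, ← pow_mul, mul_comm n 2]
          congr 2
          push_cast
          ring
      _ = q ^ (2 * m - 3 * n) * (q ^ 3 * t ^ 2) ^ n := by
          rw [zpow_add₀ hq0, zpow_natCast, mul_pow, pow_mul, pow_mul, mul_assoc]
  refine (sq_lt_one_iff₀ (norm_nonneg _)).mp ?_
  rw [← norm_pow, hsq, norm_mul, norm_zpow, norm_pow]
  rcases eq_or_ne n 0 with rfl | hn
  · simpa using zpow_lt_one_of_neg₀ hq (by omega : 2 * m < 0)
  · exact mul_lt_one_of_nonneg_of_lt_one_right (zpow_le_one_of_nonpos₀ hq.le (by omega))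
      (by positivity) (pow_lt_one₀ (norm_nonneg _) hqt hn)

theorem norm_summand_lt_one (hq : 1 < ‖q‖) (hqt : ‖q ^ 3 * t ^ 2‖ < 1) {p : ℕ × ℕ × ℕ}
    (hp : p ≠ 0) : ‖summand q t p‖ < 1 := by
  obtain ⟨X, Y, Z⟩ := p
  simp only [ne_eq, Prod.mk_eq_zero] at hp
  refine norm_zpow_mul_pow_lt_one hq hqt ?_ ?_ <;>
    simp only [qExponent, tExponent, AddMonoidHom.coe_mk, ZeroHom.coe_mk] <;> omega

end Summand

/-- The generators of the seven cones into which the positive lattice points `(X, Y, Z)` split,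
ordered as the terms of the sum. -/
def heisenbergGenerators : Fin 7 → Fin 3 → ℕ × ℕ × ℕ :=
  ![![(0, 1, 0), (0, 0, 1), (1, 1, 0)],
    ![(0, 0, 1), (1, 0, 1), (1, 1, 0)],
    ![(1, 0, 1), (1, 1, 0), (2, 0, 1)],
    ![(1, 1, 0), (2, 0, 1), (2, 1, 0)],
    ![(2, 0, 1), (2, 1, 0), (3, 0, 1)],
    ![(2, 1, 0), (4, 0, 1), (3, 0, 1)],
    ![(2, 1, 0), (1, 0, 0), (4, 0, 1)]]

/-- The apex of the `k`-th cone, its point with all coordinates zero. It is not the origin, since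
the cones contain positive points only and leave out those of their walls that belong to another
cone. -/
def heisenbergApex (k : Fin 7) : ℕ × ℕ × ℕ :=
  (k + 1, 1, 1)

/-- The point with coordinates `n` in the `k`-th cone. -/
def heisenbergPoint (k : Fin 7) (n : Fin 3 → ℕ) : ℕ × ℕ × ℕ :=
  latticeConePoint (heisenbergApex k) (heisenbergGenerators k) n

/-- The index of the cone that contains `p`. -/
def heisenbergIndex (p : ℕ × ℕ × ℕ) : Fin 7 :=
  if p.1 ≤ p.2.1 then 0
  else if p.1 ≤ p.2.1 + p.2.2 then 1
  else if p.1 ≤ p.2.1 + 2 * p.2.2 then 2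
  else if p.1 ≤ 2 * p.2.1 + 2 * p.2.2 then 3
  else if p.1 ≤ 2 * p.2.1 + 3 * p.2.2 then 4
  else if p.1 ≤ 2 * p.2.1 + 4 * p.2.2 then 5
  else 6

/-- The coordinates of a point of the `k`-th cone. The differences of natural numbers are meant
only there; elsewhere they may truncate. -/
def heisenbergCoordinates (k : Fin 7) : ℕ × ℕ × ℕ → Fin 3 → ℕ := fun (X, Y, Z) =>
  ![![Y - X, Z - 1, X - 1],
    ![Y + Z - X, X - Y - 1, Y - 1],
    ![Y + 2 * Z - X, Y - 1, X - Y - Z - 1],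
    ![2 * Y + 2 * Z - X, Z - 1, X - Y - 2 * Z - 1],
    ![2 * Y + 3 * Z - X, Y - 1, X - 2 * Y - 2 * Z - 1],
    ![Y - 1, X - 2 * Y - 3 * Z - 1, 2 * Y + 4 * Z - X],
    ![Y - 1, X - 2 * Y - 4 * Z - 1, Z - 1]] k

theorem heisenbergGenerators_ne_zero (k : Fin 7) (i : Fin 3) : heisenbergGenerators k i ≠ 0 := by
  decide +revert

theorem heisenbergPoint_eq (k : Fin 7) (n : Fin 3 → ℕ) :
    heisenbergPoint k n =
      (k + 1 + (n 0 * (heisenbergGenerators k 0).1 + n 1 * (heisenbergGenerators k 1).1 +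
          n 2 * (heisenbergGenerators k 2).1),
        1 + (n 0 * (heisenbergGenerators k 0).2.1 + n 1 * (heisenbergGenerators k 1).2.1 +
          n 2 * (heisenbergGenerators k 2).2.1),
        1 + (n 0 * (heisenbergGenerators k 0).2.2 + n 1 * (heisenbergGenerators k 1).2.2 +
          n 2 * (heisenbergGenerators k 2).2.2)) := by
  simp [heisenbergPoint, latticeConePoint, heisenbergApex, Fin.sum_univ_three, Prod.ext_iff]

theorem heisenbergCoordinates_heisenbergPoint (k : Fin 7) :
    LeftInverse (heisenbergCoordinates k) (heisenbergPoint k) := by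
  intro n
  rw [heisenbergPoint_eq, funext_iff]
  fin_cases k <;>
    simp [heisenbergCoordinates, heisenbergGenerators, Fin.forall_fin_succ] <;> omega

theorem heisenbergIndex_heisenbergPoint (k : Fin 7) (n : Fin 3 → ℕ) :
    heisenbergIndex (heisenbergPoint k n) = k := by
  rw [heisenbergPoint_eq]
  fin_cases k <;>
    simp only [heisenbergIndex, heisenbergGenerators, Fin.zero_eta, Fin.mk_one, Fin.reduceFinMk,
      Matrix.cons_val] <;> grind

theorem heisenbergPoint_heisenbergCoordinates {p : ℕ × ℕ × ℕ} (hX : 0 < p.1) (hY : 0 < p.2.1)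
    (hZ : 0 < p.2.2) :
    heisenbergPoint (heisenbergIndex p) (heisenbergCoordinates (heisenbergIndex p) p) = p := by
  obtain ⟨X, Y, Z⟩ := p
  rw [heisenbergPoint_eq, heisenbergIndex]
  split_ifs <;>
    simp only [heisenbergCoordinates, heisenbergGenerators, Prod.mk.injEq, Fin.coe_ofNat_eq_mod,
      Matrix.cons_val] at * <;> omega

theorem tExponent_heisenbergPoint (k : Fin 7) (n : Fin 3 → ℕ) :
    tExponent (heisenbergPoint k n) =
      tExponent (heisenbergApex k) + ∑ i, n i * tExponent (heisenbergGenerators k i) := by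
  rw [heisenbergPoint_eq, Fin.sum_univ_three]
  fin_cases k <;> simp [tExponent, heisenbergApex, heisenbergGenerators] <;> omega

theorem pairwise_disjoint_range_heisenbergPoint :
    Pairwise (Disjoint on fun k => Set.range (heisenbergPoint k)) := by
  intro j k hjk
  refine Set.disjoint_left.mpr ?_
  rintro _ ⟨m, rfl⟩ ⟨n, hmn⟩
  refine hjk ?_
  rw [← heisenbergIndex_heisenbergPoint j m, ← hmn, heisenbergIndex_heisenbergPoint k n]

theorem iUnion_range_heisenbergPoint :
    ⋃ k, Set.range (heisenbergPoint k) =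
      Set.range (Prod.map PNat.val (Prod.map PNat.val PNat.val)) := by
  refine Set.Subset.antisymm (Set.iUnion_subset ?_) ?_
  · rintro k _ ⟨n, rfl⟩
    rw [heisenbergPoint_eq]
    refine ⟨(⟨_, ?_⟩, ⟨_, ?_⟩, ⟨_, ?_⟩), rfl⟩ <;> omega
  · rintro _ ⟨⟨X, Y, Z⟩, rfl⟩
    exact Set.mem_iUnion.mpr
      ⟨_, _, heisenbergPoint_heisenbergCoordinates X.pos Y.pos Z.pos⟩

section HeisenbergSeries

variable {𝕜 : Type*} [NormedField 𝕜] {q t : 𝕜}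

theorem hasSum_summand_heisenbergPoint (hq : 1 < ‖q‖) (hqt : ‖q ^ 3 * t ^ 2‖ < 1) (k : Fin 7) :
    HasSum (fun n => summand q t (heisenbergPoint k n))
      (summand q t (heisenbergApex k) / ∏ i, (1 - summand q t (heisenbergGenerators k i))) :=
  have hq0 : q ≠ 0 := norm_pos_iff.mp (zero_lt_one.trans hq)
  hasSum_latticeConePoint
    (fun n => summand_latticeConePoint hq0 (tExponent_heisenbergPoint k n))
    (fun i => norm_summand_lt_one hq hqt (heisenbergGenerators_ne_zero k i))

theorem hasSum_summand_pnat (hq : 1 < ‖q‖) (hqt : ‖q ^ 3 * t ^ 2‖ < 1) :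
    HasSum (summand q t ∘ Prod.map PNat.val (Prod.map PNat.val PNat.val))
      (∑ k, summand q t (heisenbergApex k) /
        ∏ i, (1 - summand q t (heisenbergGenerators k i))) := by
  have hpnat : Injective (Prod.map PNat.val (Prod.map PNat.val PNat.val)) :=
    PNat.coe_injective.prodMap (PNat.coe_injective.prodMap PNat.coe_injective)
  rw [← hpnat.hasSum_range_iff, ← iUnion_range_heisenbergPoint]
  exact hasSum_iUnion_range_of_pairwise_disjoint
    (fun k => (heisenbergCoordinates_heisenbergPoint k).injective)
    pairwise_disjoint_range_heisenbergPoint (hasSum_summand_heisenbergPoint hq hqt)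

theorem sum_summand_heisenbergApex_div (q t : 𝕜) :
    ∑ k, summand q t (heisenbergApex k) / ∏ i, (1 - summand q t (heisenbergGenerators k i)) =
      q⁻¹ ^ 2 * t / ((1 - q⁻¹ ^ 2) * (1 - q⁻¹ ^ 3) * (1 - q * t)) +
        q * t ^ 2 / ((1 - q⁻¹ ^ 3) * (1 - t) * (1 - q * t)) +
        q ^ 4 * t ^ 3 / ((1 - t) * (1 - q * t) * (1 - q ^ 3 * t ^ 2)) +
        q ^ 7 * t ^ 5 / ((1 - q * t) * (1 - q ^ 3 * t ^ 2) * (1 - q ^ 4 * t ^ 3)) +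
        q ^ 10 * t ^ 7 /
          ((1 - q ^ 3 * t ^ 2) * (1 - q ^ 4 * t ^ 3) * (1 - q ^ 6 * t ^ 4)) +
        q ^ 13 * t ^ 9 /
          ((1 - q ^ 4 * t ^ 3) * (1 - q ^ 9 * t ^ 6) * (1 - q ^ 6 * t ^ 4)) +
        q ^ 16 * t ^ 12 /
          ((1 - q ^ 4 * t ^ 3) * (1 - q ^ 3 * t ^ 3) * (1 - q ^ 9 * t ^ 6)) := by
  simp [Fin.sum_univ_seven, Fin.prod_univ_three, summand, qExponent, tExponent, heisenbergApex,
    heisenbergGenerators]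

theorem heisenberg_Z322a_general (q t : 𝕜) (hq : 1 < ‖q‖) (hqt : ‖q ^ 3 * t ^ 2‖ < 1) :
    HasSum
      (fun p : ℕ+ × ℕ+ × ℕ+ =>
        q ^ (3 * ((p.1 : ℕ) : ℤ) - 2 * ((p.2.1 : ℕ) : ℤ) - 3 * ((p.2.2 : ℕ) : ℤ)) *
          t ^ (3 * ((p.1 : ℕ) : ℤ) -
            min ((p.1 : ℕ) : ℤ) (((p.2.1 : ℕ) : ℤ) + 2 * ((p.2.2 : ℕ) : ℤ)) -
            min ((p.1 : ℕ) : ℤ) (2 * ((p.2.1 : ℕ) : ℤ) + 4 * ((p.2.2 : ℕ) : ℤ))))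
      (q⁻¹ ^ 2 * t / ((1 - q⁻¹ ^ 2) * (1 - q⁻¹ ^ 3) * (1 - q * t)) +
        q * t ^ 2 / ((1 - q⁻¹ ^ 3) * (1 - t) * (1 - q * t)) +
        q ^ 4 * t ^ 3 / ((1 - t) * (1 - q * t) * (1 - q ^ 3 * t ^ 2)) +
        q ^ 7 * t ^ 5 / ((1 - q * t) * (1 - q ^ 3 * t ^ 2) * (1 - q ^ 4 * t ^ 3)) +
        q ^ 10 * t ^ 7 /
          ((1 - q ^ 3 * t ^ 2) * (1 - q ^ 4 * t ^ 3) * (1 - q ^ 6 * t ^ 4)) +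
        q ^ 13 * t ^ 9 /
          ((1 - q ^ 4 * t ^ 3) * (1 - q ^ 9 * t ^ 6) * (1 - q ^ 6 * t ^ 4)) +
        q ^ 16 * t ^ 12 /
          ((1 - q ^ 4 * t ^ 3) * (1 - q ^ 3 * t ^ 3) * (1 - q ^ 9 * t ^ 6))) := by
  have hsum := hasSum_summand_pnat hq hqt
  rw [sum_summand_heisenbergApex_div] at hsum
  simpa only [comp_def, summand, ← zpow_natCast, tExponent_cast] using! hsum

end HeisenbergSeries

/-- The series computing 𝒵₃₂₂ₐ:
    ∑_{X,Y,Z≥1} q^{3X-2Y-3Z} t^{3X-min(X,Y+2Z)-min(X,2Y+4Z)}. -/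
theorem heisenberg_Z322a (q t : ℝ) (hq : 1 < q) (ht : 0 < t) (hqt : q ^ 3 * t < 1) :
    HasSum
      (fun p : ℕ+ × ℕ+ × ℕ+ =>
        q ^ (3 * ((p.1 : ℕ) : ℤ) - 2 * ((p.2.1 : ℕ) : ℤ) - 3 * ((p.2.2 : ℕ) : ℤ)) *
          t ^ (3 * ((p.1 : ℕ) : ℤ) -
            min ((p.1 : ℕ) : ℤ) (((p.2.1 : ℕ) : ℤ) + 2 * ((p.2.2 : ℕ) : ℤ)) -
            min ((p.1 : ℕ) : ℤ) (2 * ((p.2.1 : ℕ) : ℤ) + 4 * ((p.2.2 : ℕ) : ℤ))))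
      (q⁻¹ ^ 2 * t / ((1 - q⁻¹ ^ 2) * (1 - q⁻¹ ^ 3) * (1 - q * t)) +
        q * t ^ 2 / ((1 - q⁻¹ ^ 3) * (1 - t) * (1 - q * t)) +
        q ^ 4 * t ^ 3 / ((1 - t) * (1 - q * t) * (1 - q ^ 3 * t ^ 2)) +
        q ^ 7 * t ^ 5 / ((1 - q * t) * (1 - q ^ 3 * t ^ 2) * (1 - q ^ 4 * t ^ 3)) +
        q ^ 10 * t ^ 7 /
          ((1 - q ^ 3 * t ^ 2) * (1 - q ^ 4 * t ^ 3) * (1 - q ^ 6 * t ^ 4)) +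
        q ^ 13 * t ^ 9 /
          ((1 - q ^ 4 * t ^ 3) * (1 - q ^ 9 * t ^ 6) * (1 - q ^ 6 * t ^ 4)) +
        q ^ 16 * t ^ 12 /
          ((1 - q ^ 4 * t ^ 3) * (1 - q ^ 3 * t ^ 3) * (1 - q ^ 9 * t ^ 6))) := by
  have : 0 < q := zero_lt_one.trans hq
  have ht1 : t < 1 := (le_mul_of_one_le_left ht.le (one_le_pow₀ hq.le)).trans_lt hqt
  refine heisenberg_Z322a_general q t (hq.trans_le (le_abs_self q)) ?_
  rw [Real.norm_of_nonneg (by positivity), sq, ← mul_assoc]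
  exact mul_lt_one_of_nonneg_of_lt_one_left (by positivity) hqt ht1.le
end
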